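/- arXiv:2407.04429 — 2 statements merged into one kernel-verified Lean document; each statement's English description precedes it below -/
import Mathlib

section
/- Let n ≥ 2, let σ and σ̃ be permutations of {1,…,n}, let ρ be the n-cycle with ρ(i) = i+1 for i < n and ρ(n) = 1, and suppose the pair (σ,σ̃) satisfies condition (C). If a ∈ {1,…,n} satisfies σ(a) ≠ a and σ̃(a) = a, then for every natural number k ≥ 0, σ̃(σ^k(a)) = σ^k(a). -/
/-- Condition (C) on a pair of permutations `(σ, σ')` relative to the `n`-cycle `ρ`:
for every `i` with `σ' i ≠ i`, either `σ' i = σ i`, or both `σ i = i` and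
`σ' i = ρ i`. -/
def CondC (n : ℕ) (ρ σ σ' : Equiv.Perm (Fin n)) : Prop :=
  ∀ i, σ' i ≠ i → (σ' i = σ i ∨ (σ i = i ∧ σ' i = ρ i))

/-!
If `σ x ≠ x` and `σ'` fixes `σ x`, then `σ'` fixes `x`: otherwise `σ' x = σ x = σ' (σ x)`, against
the injectivity of `σ'`. Being fixed by `σ'` thus propagates backwards along a nontrivial orbit
of `σ`; as the orbit is a cycle, going backwards from `a` reaches every `(σ ^ k) a`.
-/

section

open Function

variable {α : Type*} {f g : α → α} {x a : α}

theorem isFixedPt_of_isFixedPt_apply (hg : Injective g) (hfg : g x ≠ x → g x = f x)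
    (hx : f x ≠ x) (hgx : IsFixedPt g (f x)) : IsFixedPt g x := by
  by_contra hne
  have hgf : g (f x) = g x := hgx.eq.trans (hfg hne).symm
  exact hx (hg hgf)

theorem isFixedPt_of_isFixedPt_iterate (hg : Injective g)
    (hfg : ∀ x, f x ≠ x → g x ≠ x → g x = f x) (m : ℕ) (hx : ¬ IsFixedPt f (f^[m] x))
    (hgx : IsFixedPt g (f^[m] x)) : IsFixedPt g x := by
  induction m generalizing x with
  | zero => exact hgx
  | succ m ih =>
    have hfx : ¬ IsFixedPt f x := fun h => hx (by rwa [(h.iterate (m + 1)).eq])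
    exact isFixedPt_of_isFixedPt_apply hg (hfg x hfx) hfx (ih hx hgx)

theorem exists_iterate_iterate_eq_of_mem_periodicPts (ha : a ∈ periodicPts f) (k : ℕ) :
    ∃ m, f^[m] (f^[k] a) = a := by
  obtain ⟨p, hp, hpa⟩ := ha
  refine ⟨p * k - k, ?_⟩
  rw [← iterate_add_apply, Nat.sub_add_cancel (Nat.le_mul_of_pos_left k hp)]
  exact hpa.mul_const k

theorem lin_lem3_general (hg : Injective g) (hfg : ∀ x, f x ≠ x → g x ≠ x → g x = f x)
    (hper : a ∈ periodicPts f) (ha : f a ≠ a) (hga : g a = a) (k : ℕ) :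
    g (f^[k] a) = f^[k] a := by
  obtain ⟨m, hm⟩ := exists_iterate_iterate_eq_of_mem_periodicPts hper k
  exact isFixedPt_of_isFixedPt_iterate hg hfg m (by rwa [hm]) (by rwa [hm])

end

theorem CondC.apply_eq_apply {n : ℕ} {ρ σ σ' : Equiv.Perm (Fin n)} (hC : CondC n ρ σ σ')
    (i : Fin n) (hσ : σ i ≠ i) (hσ' : σ' i ≠ i) : σ' i = σ i :=
  (hC i hσ').resolve_right fun h => hσ h.1

/-- If `σ a ≠ a` and `σ' a = a`, then `σ'(σ^k(a)) = σ^k(a)` for all `k ≥ 0`. -/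
theorem lin_lem3 (n : ℕ) (hn : 2 ≤ n) (ρ σ σ' : Equiv.Perm (Fin n))
    (hρ : ∀ i : Fin n, (ρ i).val = if i.val + 1 < n then i.val + 1 else 0)
    (hC : CondC n ρ σ σ')
    (a : Fin n) (ha : σ a ≠ a) (ha' : σ' a = a) :
    ∀ k : ℕ, σ' ((σ ^ k) a) = (σ ^ k) a := by
  simpa only [Equiv.Perm.iterate_eq_pow] using
    lin_lem3_general σ'.injective hC.apply_eq_apply (σ.injective.mem_periodicPts a) ha ha'
end

section
/- Let n ≥ 2, let σ and σ̃ be permutations of {1,…,n}, let ρ be the n-cycle with ρ(i) = i+1 for i < n and ρ(n) = 1, and suppose the pair (σ,σ̃) satisfies condition (C). If moreover σ(1) ≠ 1, then every fixed point of σ is a fixed point of σ̃: for all a ∈ {1,…,n}, σ(a) = a implies σ̃(a) = a. -/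
/-!
The points fixed by `σ` but moved by `σ'` form a set stable under `ρ`: if `a` is such a point and
`b = ρ a = σ' a` were moved by `σ`, then `σ'` would agree with `σ` along the whole `σ`-cycle of `b`,
so that the `σ`-predecessor of `b` and `a` would have the same image under `σ'`. Being finite, the
set is a union of cycles of `ρ`, hence misses every `ρ`-cycle on which `σ` moves some point.
-/

open Equiv Set

/-- Condition (C) on an arbitrary type, relative to a map `ρ` that need not be a cycle:
each point moved by `σ'` follows `σ`, or is a fixed point of `σ` rerouted along `ρ`. -/
def IsRerouting {α : Type*} (ρ : α → α) (σ σ' : Perm α) : Prop :=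
  ∀ i, σ' i ≠ i → σ' i = σ i ∨ (σ i = i ∧ σ' i = ρ i)

section

variable {α : Type*}

theorem mem_of_mapsTo_of_sameCycle {f : Perm α} {s : Set α} {x y : α} (hs : s.Finite)
    (hf : MapsTo f s s) (hxy : f.SameCycle x y) (hx : x ∈ s) : y ∈ s := by
  obtain ⟨k, rfl⟩ := hxy
  have hbij : BijOn f s s := (hs.injOn_iff_bijOn_of_mapsTo hf).1 f.injective.injOn
  exact (hbij.perm_zpow k).mapsTo hx

namespace IsRerouting

variable {ρ : α → α} {σ σ' : Perm α} {x : α}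

theorem apply_eq_of_apply_ne (hC : IsRerouting ρ σ σ') (hσ : σ x ≠ x) (hσ' : σ' x ≠ x) :
    σ' x = σ x :=
  (hC x hσ').resolve_right fun h => hσ h.1

theorem apply_eq_of_apply_eq (hC : IsRerouting ρ σ σ') (hσ : σ x = x) (hσ' : σ' x ≠ x) :
    σ' x = ρ x :=
  ((hC x hσ').resolve_left fun h => hσ' (h.trans hσ)).2

theorem mapsTo_moved_moved (hC : IsRerouting ρ σ σ') :
    MapsTo σ {x | σ x ≠ x ∧ σ' x ≠ x} {x | σ x ≠ x ∧ σ' x ≠ x} := by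
  rintro x ⟨hσ, hσ'⟩
  have hx : σ' x = σ x := hC.apply_eq_of_apply_ne hσ hσ'
  exact ⟨σ.injective.ne hσ, hx ▸ σ'.injective.ne hσ'⟩

theorem mapsTo_fixed_moved (hC : IsRerouting ρ σ σ') (hfin : {x | σ' x ≠ x}.Finite) :
    MapsTo ρ {x | σ x = x ∧ σ' x ≠ x} {x | σ x = x ∧ σ' x ≠ x} := by
  rintro a ⟨hσa, hσ'a⟩
  rw [← hC.apply_eq_of_apply_eq hσa hσ'a]
  have hσ'b : σ' (σ' a) ≠ σ' a := σ'.injective.ne hσ'a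
  refine ⟨?_, hσ'b⟩
  by_contra hσb
  obtain ⟨hσc, hσ'c⟩ : σ.symm (σ' a) ∈ {x | σ x ≠ x ∧ σ' x ≠ x} :=
    mem_of_mapsTo_of_sameCycle (hfin.subset fun _ h => h.2) hC.mapsTo_moved_moved
      (Perm.SameCycle.refl σ (σ' a)).symm_apply_right ⟨hσb, hσ'b⟩
  have hca : σ.symm (σ' a) = a := σ'.injective <| by
    rw [hC.apply_eq_of_apply_ne hσc hσ'c, apply_symm_apply]
  exact hσc (by rw [hca, hσa])

end IsRerouting

theorem lin_lem6_general {ρ σ σ' : Perm α} (hC : IsRerouting ρ σ σ')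
    (hfin : {x | σ' x ≠ x}.Finite) {a b : α} (hab : ρ.SameCycle a b) (ha : σ a = a)
    (hb : σ b ≠ b) : σ' a = a := by
  by_contra ha'
  exact hb (mem_of_mapsTo_of_sameCycle (hfin.subset fun _ h => h.2) (hC.mapsTo_fixed_moved hfin)
    hab ⟨ha, ha'⟩).1

end

theorem sameCycle_finRotate {n : ℕ} (i j : Fin n) : (finRotate n).SameCycle i j := by
  have := i.neZero
  refine ⟨(j - i).val, ?_⟩
  rw [zpow_natCast, Perm.coe_pow, ← finCycle_eq_finRotate_iterate, finCycle_apply, add_sub_cancel]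

theorem eq_finRotate_of_val_apply {n : ℕ} {ρ : Perm (Fin n)}
    (hρ : ∀ i : Fin n, (ρ i).val = if i.val + 1 < n then i.val + 1 else 0) :
    ρ = finRotate n := by
  ext i
  cases n with
  | zero => exact i.elim0
  | succ m =>
    rw [hρ, coe_finRotate]
    grind

/-- If moreover `σ` does not fix the first element, then every fixed point of `σ` is a fixed point of `σ'`. -/
theorem lin_lem6 (n : ℕ) (hn : 2 ≤ n) (ρ σ σ' : Equiv.Perm (Fin n))
    (hρ : ∀ i : Fin n, (ρ i).val = if i.val + 1 < n then i.val + 1 else 0)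
    (hC : CondC n ρ σ σ')
    (hσ1 : σ ⟨0, by omega⟩ ≠ ⟨0, by omega⟩) :
    ∀ a : Fin n, σ a = a → σ' a = a := by
  obtain rfl := eq_finRotate_of_val_apply hρ
  exact fun a ha => lin_lem6_general hC (toFinite _) (sameCycle_finRotate a _) ha hσ1
end
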